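/- arXiv:2103.01344 — 3 statements merged into one kernel-verified Lean document; each statement's English description precedes it below -/
import Mathlib

section
/- Let a ∈ F^n with n = K·m, let v_{K+1},...,v_{K+T} ∈ F^m be arbitrary, and let u(z) be the F^m-valued Lagrange sharing polynomial of degree at most N−1 with u(β_j) = a^{(j)} for j ∈ {1,...,K} and u(β_j) = v_j for j ∈ {K+1,...,K+T}. For θ ∈ {1,...,N}, j ∈ {1,...,K}, t ∈ {0,...,m−1} define x_{j,t}^{(θ)} = ( (1/K) Σ_{l=1}^{K} ω^{−(Kt+j−1)(l−1)} · FFT_{S'}^{-1}(u(α_θ)) · ∏_{k=1,k≠θ}^{N} (β_l − α_k)/(α_θ − α_k) )_{(Kt+j−1) mod m}. Then for all such j and t: Σ_{θ=1}^{N} x_{j,t}^{(θ)} = (FFT_S^{-1}(a))_{Kt+j−1}. -/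
/-- The index `K*t + j` (stride-`K` subsampling) as an element of `Fin n` when `n = K*m`. -/
def strideIx {n : ℕ} (K m : ℕ) (hnKm : n = K * m) (t : Fin m) (j : Fin K) : Fin n :=
  ⟨K * (t : ℕ) + (j : ℕ), by
    have ht := t.isLt
    have hj := j.isLt
    subst hnKm
    calc K * (t : ℕ) + (j : ℕ) < K * (t : ℕ) + K := by omega
      _ = K * ((t : ℕ) + 1) := by ring
      _ ≤ K * m := Nat.mul_le_mul_left K (by omega)⟩

open Polynomial in
/-- Explicit product form of the values of the Lagrange basis polynomials. -/
lemma Lagrange.eval_basis_eq_prod_div {F ι : Type*} [Field F] [DecidableEq ι] (s : Finset ι)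
    (v : ι → F) (i : ι) (z : F) :
    (Lagrange.basis s v i).eval z = ∏ k ∈ s.erase i, (z - v k) / (v i - v k) := by
  simp only [Lagrange.basis, eval_prod, Lagrange.basisDivisor, eval_mul, eval_C, eval_sub, eval_X]
  exact Finset.prod_congr rfl fun k _ => by rw [div_eq_inv_mul]

open Polynomial in
/-- Interpolating at the nodes `β` and then re-interpolating from the values at the nodes `α`
recovers the data `w` at the nodes `β`. -/
lemma Lagrange.sum_basis_mul_sum_basis {F ι : Type*} [Field F] [DecidableEq ι] [Fintype ι]
    {α β : ι → F} (hα : Function.Injective α) (hβ : Function.Injective β) (w : ι → F) (l : ι) :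
    ∑ θ, (∏ k ∈ Finset.univ.erase θ, (β l - α k) / (α θ - α k)) *
      ∑ i, (∏ k ∈ Finset.univ.erase i, (α θ - β k) / (β i - β k)) * w i = w l := by
  have heval (γ r : ι → F) (z : F) : (Lagrange.interpolate Finset.univ γ r).eval z =
      ∑ i, (∏ k ∈ Finset.univ.erase i, (z - γ k) / (γ i - γ k)) * r i := by
    simp only [Lagrange.interpolate_apply, eval_finsetSum, eval_mul, eval_C,
      Lagrange.eval_basis_eq_prod_div, mul_comm]
  have hdeg := Lagrange.degree_interpolate_lt (s := Finset.univ) w hβ.injOn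
  simp only [← heval]
  rw [← Lagrange.eq_interpolate hα.injOn hdeg,
    Lagrange.eval_interpolate_at_node w hβ.injOn (Finset.mem_univ l)]

/-- A sum over `Fin (K * m)` splits into sums over the stride-`K` classes. -/
lemma sum_eq_sum_strideIx {M : Type*} [AddCommMonoid M] {n : ℕ} (K m : ℕ) (hnKm : n = K * m)
    (f : Fin n → M) : ∑ μ, f μ = ∑ l : Fin K, ∑ t : Fin m, f (strideIx K m hnKm t l) := by
  rw [Finset.sum_comm, ← Fintype.sum_prod_type']
  refine (Fintype.sum_equiv
    (finProdFinEquiv.trans (finCongr ((Nat.mul_comm m K).trans hnKm.symm))) _ _ fun p => ?_).symm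
  congr 1
  ext
  simp [strideIx, add_comm]

/-- Exponents of a root of unity of order dividing `K * m` may be reduced modulo `m` when they
carry a factor `K`. -/
lemma pow_mul_mod_mul {M : Type*} [Monoid M] {ζ : M} {K m : ℕ} (hζ : ζ ^ (K * m) = 1)
    (s t : ℕ) : ζ ^ (K * (s % m) * t) = ζ ^ (K * s * t) := by
  have h : (ζ ^ K) ^ m = 1 := by rw [← pow_mul, hζ]
  rw [pow_mul, pow_mul, pow_mul ζ (K * s), pow_mul ζ K, ← pow_eq_pow_mod s h]

/-- Lemma 2 of the paper: the shares recombine to the inverse DFT of `a`.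
Here `ω` is a primitive `n`-th root of unity, `n = K*m`,
`FFT_{S'}⁻¹(b)_r = (1/m) ∑_t ω^{-Krt} b_t`, `a^{(j)}_t = a_{Kt+j}` (zero-indexed `j`),
`u` is the Lagrange sharing polynomial of the `a^{(j)}` with randomness `v`, and
`x θ j t` is the quantity `x_{j,t}^{(θ)}` of the paper. -/
theorem share_recombination_inverse_dft
    {F : Type*} [Field F] (n K T m : ℕ) (hn : 0 < n) (hK : 0 < K) (hT : 0 < T) (hm : 0 < m)
    (hnKm : n = K * m)
    (ω : F) (hω1 : ω ^ n = 1) (hωprim : ∀ m', 0 < m' → m' < n → ω ^ m' ≠ 1)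
    (β : Fin (K + T) → F) (α : Fin (K + T) → F)
    (hβ : Function.Injective β) (hα : Function.Injective α)
    (hαβ : ∀ i j, α i ≠ β j)
    (a : Fin n → F) (v : Fin T → Fin m → F)
    (u : F → Fin m → F)
    (hu : ∀ z, u z =
      (∑ j : Fin K, (∏ k ∈ Finset.univ.erase (Fin.castAdd T j),
          (z - β k) / (β (Fin.castAdd T j) - β k)) •
            (fun t : Fin m => a (strideIx K m hnKm t j))) +
      (∑ j : Fin T, (∏ k ∈ Finset.univ.erase (Fin.natAdd K j),
          (z - β k) / (β (Fin.natAdd K j) - β k)) • v j))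
    (x : Fin (K + T) → Fin K → Fin m → F)
    (hx : ∀ (θ : Fin (K + T)) (j : Fin K) (t : Fin m), x θ j t =
      (K : F)⁻¹ * ∑ l : Fin K,
        ω⁻¹ ^ ((K * (t : ℕ) + (j : ℕ)) * (l : ℕ)) *
        (∏ k ∈ Finset.univ.erase θ, (β (Fin.castAdd T l) - α k) / (α θ - α k)) *
        ((m : F)⁻¹ * ∑ t' : Fin m,
          ω⁻¹ ^ (K * ((K * (t : ℕ) + (j : ℕ)) % m) * (t' : ℕ)) * u (α θ) t'))
    (j : Fin K) (t : Fin m) :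
    ∑ θ : Fin (K + T), x θ j t =
      (n : F)⁻¹ * ∑ μ : Fin n, ω⁻¹ ^ ((K * (t : ℕ) + (j : ℕ)) * (μ : ℕ)) * a μ := by
  have hζ : ω⁻¹ ^ (K * m) = 1 := by rw [inv_pow, ← hnKm, hω1, inv_one]
  have hrec (l : Fin K) (t' : Fin m) :
      ∑ θ, (∏ k ∈ Finset.univ.erase θ, (β (Fin.castAdd T l) - α k) / (α θ - α k)) * u (α θ) t' =
        a (strideIx K m hnKm t' l) := by
    have h := Lagrange.sum_basis_mul_sum_basis hα hβ
      (Fin.append (fun j => a (strideIx K m hnKm t' j)) fun j => v j t') (Fin.castAdd T l)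
    rw [Fin.append_left] at h
    rw [← h]
    refine Finset.sum_congr rfl fun θ _ => ?_
    simp [hu, Fin.sum_univ_add]
  rw [sum_eq_sum_strideIx K m hnKm]
  simp only [hx, ← Finset.mul_sum, pow_mul_mod_mul hζ]
  have hcast : (n : F) = K * m := by rw [hnKm, Nat.cast_mul]
  rw [Finset.sum_comm, hcast, mul_inv, mul_assoc, Finset.mul_sum (a := (m : F)⁻¹)]
  congr 1
  refine Finset.sum_congr rfl fun l _ => ?_
  simp only [← hrec, Finset.mul_sum]
  rw [Finset.sum_comm]
  refine Finset.sum_congr rfl fun t' _ => Finset.sum_congr rfl fun θ _ => ?_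
  simp only [strideIx]
  ring
end

section
/- (Privacy of the multiparty algorithm.) Let A : Ω → F^{m×K} be a random variable; let V : Ω → F^{m×T} be uniformly distributed on F^{m×T} and independent of A; let P ∈ F^{K×T} be constant and Q ∈ F^{T×T} constant and invertible; and set U = A·P + V·Q. Let X̃ : Ω → F^{M×K} be a random variable such that X̃ = g(A, V) for a deterministic function g and A = f(X̃) for a deterministic function f. Let Ṽ : Ω → F^{M×T} be uniformly distributed on F^{M×T} and independent of the pair (A, V), and set Ũ = X̃·P' + Ṽ·Q' for constant P' ∈ F^{K×T} and constant invertible Q' ∈ F^{T×T}. Then I[(U, Ũ) : A] = 0; i.e., the colluding observations (U, Ũ) reveal no information about A. -/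
open MeasureTheory ProbabilityTheory
open scoped ENNReal

/-- The (discrete/product) measurable structure on matrices, inherited from functions. -/
instance matrixMeasurableSpace {l k α : Type*} [MeasurableSpace α] :
    MeasurableSpace (Matrix l k α) :=
  inferInstanceAs (MeasurableSpace (l → k → α))

/-- Shannon entropy (natural log) of a finite-valued random variable. -/
noncomputable def shEntropy {Ω : Type*} [MeasurableSpace Ω] {S : Type*} [Fintype S]
    (μ : Measure Ω) (X : Ω → S) : ℝ :=
  -∑ s : S, ((μ (X ⁻¹' {s})).toReal * Real.log (μ (X ⁻¹' {s})).toReal)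

/-- Mutual information `I[X : Y] = H[X] + H[Y] - H[X, Y]`. -/
noncomputable def shMutualInfo {Ω : Type*} [MeasurableSpace Ω] {S T : Type*}
    [Fintype S] [Fintype T] (μ : Measure Ω) (X : Ω → S) (Y : Ω → T) : ℝ :=
  shEntropy μ X + shEntropy μ Y - shEntropy μ (fun ω => (X ω, Y ω))

instance matrixMeasurableSingletonClass {l k α : Type*} [Countable l] [Countable k]
    [MeasurableSpace α] [MeasurableSingletonClass α] :
    MeasurableSingletonClass (Matrix l k α) :=
  inferInstanceAs (MeasurableSingletonClass (l → k → α))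

section

variable {Ω : Type*} [MeasurableSpace Ω] {μ : Measure Ω}

/-- The total probability formula for a finite-valued random variable `Y`. -/
lemma sum_measureReal_inter_preimage_singleton [IsFiniteMeasure μ] {T : Type*} [Fintype T]
    [MeasurableSpace T] [MeasurableSingletonClass T] {Y : Ω → T} (hY : Measurable Y)
    (E : Set Ω) : ∑ t, μ.real (E ∩ Y ⁻¹' {t}) = μ.real E := by
  have h := sum_measureReal_preimage_singleton (μ := μ.restrict E) (f := Y) Finset.univ
    (fun t _ => hY (measurableSet_singleton t))
  simpa [measureReal_restrict_apply (hY (measurableSet_singleton _)), Set.inter_comm] using h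

/-- Mutual information vanishes when the joint distribution is the product of the marginals. -/
lemma shMutualInfo_eq_zero_of_joint_eq_mul [IsProbabilityMeasure μ] {S T : Type*}
    [Fintype S] [Fintype T] [MeasurableSpace S] [MeasurableSingletonClass S]
    [MeasurableSpace T] [MeasurableSingletonClass T] {X : Ω → S} {Y : Ω → T}
    (hX : Measurable X) (hY : Measurable Y)
    (h : ∀ s t, μ.real (X ⁻¹' {s} ∩ Y ⁻¹' {t}) = μ.real (X ⁻¹' {s}) * μ.real (Y ⁻¹' {t})) :
    shMutualInfo μ X Y = 0 := by
  have hXsum : ∑ s, μ.real (X ⁻¹' {s}) = 1 := by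
    simpa using sum_measureReal_inter_preimage_singleton (μ := μ) hX Set.univ
  have hYsum : ∑ t, μ.real (Y ⁻¹' {t}) = 1 := by
    simpa using sum_measureReal_inter_preimage_singleton (μ := μ) hY Set.univ
  have hlog : ∀ x y : ℝ, x * y * Real.log (x * y) =
      x * Real.log x * y + x * (y * Real.log y) := by
    intro x y
    rcases eq_or_ne x 0 with rfl | hx
    · simp
    rcases eq_or_ne y 0 with rfl | hy
    · simp
    rw [Real.log_mul hx hy]
    ring
  have hpre : ∀ s t, (fun ω => (X ω, Y ω)) ⁻¹' {(s, t)} = X ⁻¹' {s} ∩ Y ⁻¹' {t} := by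
    intro s t
    ext ω
    simp
  simp only [shMutualInfo, shEntropy, ← measureReal_def, Fintype.sum_prod_type, hpre, h, hlog,
    Finset.sum_add_distrib, ← Finset.mul_sum, ← Finset.sum_mul, hXsum, hYsum]
  ring

/-- One-time pad: masking by an independent uniform variable `N`, through a permutation that may
depend on `X`, yields a uniform variable that is independent of `X`. -/
lemma measureReal_inter_perm_apply_of_uniform {α S : Type*} [Fintype S]
    [MeasurableSpace α] [MeasurableSingletonClass α] [MeasurableSpace S]
    [MeasurableSingletonClass S] {X : Ω → α} {N : Ω → S} (hindep : IndepFun X N μ)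
    (hunif : ∀ s, μ (N ⁻¹' {s}) = ((Fintype.card S : ℝ≥0∞))⁻¹)
    (φ : α → Equiv.Perm S) (x : α) (s : S) :
    μ.real (X ⁻¹' {x} ∩ (fun ω => φ (X ω) (N ω)) ⁻¹' {s}) =
      μ.real (X ⁻¹' {x}) * (Fintype.card S : ℝ)⁻¹ := by
  have hset : X ⁻¹' {x} ∩ (fun ω => φ (X ω) (N ω)) ⁻¹' {s} =
      X ⁻¹' {x} ∩ N ⁻¹' {(φ x).symm s} := by
    ext ω
    simp only [Set.mem_inter_iff, Set.mem_preimage, Set.mem_singleton_iff,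
      Equiv.eq_symm_apply]
    exact and_congr_right fun h => by rw [h]
  rw [hset, measureReal_def, hindep.measure_inter_preimage_eq_mul _ _
    (measurableSet_singleton x) (measurableSet_singleton _), hunif]
  simp [measureReal_def]

end

/-- The permutation `V ↦ B + V * Q` of matrices, for invertible `Q`. -/
noncomputable def addMulPerm {F l n : Type*} [Field F] [Fintype n] [DecidableEq n]
    (B : Matrix l n F) {Q : Matrix n n F} (hQ : IsUnit Q) : Equiv.Perm (Matrix l n F) where
  toFun V := B + V * Q
  invFun W := (W - B) * Q⁻¹
  left_inv V := by
    simp [Matrix.mul_nonsing_inv_cancel_right _ _ ((Matrix.isUnit_iff_isUnit_det Q).1 hQ)]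
  right_inv W := by
    simp [Matrix.nonsing_inv_mul_cancel_right _ _ ((Matrix.isUnit_iff_isUnit_det Q).1 hQ)]

/-- Theorem 2 of the paper / privacy of the multiparty algorithm:
with `U = A·P + V·Q` (first round, `V` uniform and independent of `A`),
`X̃ = g(A, V)` with `A = f(X̃)`, and `Ũ = X̃·P' + Ṽ·Q'` (second round, `Ṽ` uniform
and independent of `(A, V)`), for constant `P, P'` and constant invertible `Q, Q'`,
the colluding observations `(U, Ũ)` reveal no information on `A`: `I[(U, Ũ) : A] = 0`. -/
theorem multiparty_privacy
    {Ω : Type*} [MeasurableSpace Ω] (μ : Measure Ω) [IsProbabilityMeasure μ]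
    {F : Type*} [Field F] [Fintype F] [DecidableEq F]
    [MeasurableSpace F] [MeasurableSingletonClass F]
    (m M K T : ℕ)
    (A : Ω → Matrix (Fin m) (Fin K) F) (V : Ω → Matrix (Fin m) (Fin T) F)
    (Xt : Ω → Matrix (Fin M) (Fin K) F) (Vt : Ω → Matrix (Fin M) (Fin T) F)
    (hA : Measurable A) (hV : Measurable V) (hXt : Measurable Xt) (hVt : Measurable Vt)
    (hVunif : ∀ s : Matrix (Fin m) (Fin T) F,
      μ (V ⁻¹' {s}) = ((Fintype.card (Matrix (Fin m) (Fin T) F) : ℝ≥0∞))⁻¹)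
    (hVindep : IndepFun A V μ)
    (P : Matrix (Fin K) (Fin T) F) (Q : Matrix (Fin T) (Fin T) F) (hQ : IsUnit Q)
    (U : Ω → Matrix (Fin m) (Fin T) F) (hU : ∀ ω, U ω = A ω * P + V ω * Q)
    (g : Matrix (Fin m) (Fin K) F → Matrix (Fin m) (Fin T) F → Matrix (Fin M) (Fin K) F)
    (hXg : ∀ ω, Xt ω = g (A ω) (V ω))
    (f : Matrix (Fin M) (Fin K) F → Matrix (Fin m) (Fin K) F)
    (hAf : ∀ ω, A ω = f (Xt ω))
    (hVtunif : ∀ s : Matrix (Fin M) (Fin T) F,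
      μ (Vt ⁻¹' {s}) = ((Fintype.card (Matrix (Fin M) (Fin T) F) : ℝ≥0∞))⁻¹)
    (hVtindep : IndepFun (fun ω => (A ω, V ω)) Vt μ)
    (P' : Matrix (Fin K) (Fin T) F) (Q' : Matrix (Fin T) (Fin T) F) (hQ' : IsUnit Q')
    (Ut : Ω → Matrix (Fin M) (Fin T) F) (hUt : ∀ ω, Ut ω = Xt ω * P' + Vt ω * Q') :
    shMutualInfo μ (fun ω => (U ω, Ut ω)) A = 0 := by
  have hUpad : U = fun ω => addMulPerm (A ω * P) hQ (V ω) := funext hU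
  have hUtpad : Ut = fun ω => addMulPerm (g (A ω) (V ω) * P') hQ' (Vt ω) := by
    funext ω
    rw [hUt, hXg]
    rfl
  have hUA : ∀ a u, μ.real (A ⁻¹' {a} ∩ U ⁻¹' {u}) = μ.real (A ⁻¹' {a}) *
      (Fintype.card (Matrix (Fin m) (Fin T) F) : ℝ)⁻¹ := by
    rw [hUpad]
    exact measureReal_inter_perm_apply_of_uniform hVindep hVunif
      (fun a => addMulPerm (a * P) hQ)
  have hUtAV : ∀ p w, μ.real ((fun ω => (A ω, V ω)) ⁻¹' {p} ∩ Ut ⁻¹' {w}) =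
      μ.real ((fun ω => (A ω, V ω)) ⁻¹' {p}) *
        (Fintype.card (Matrix (Fin M) (Fin T) F) : ℝ)⁻¹ := by
    rw [hUtpad]
    exact measureReal_inter_perm_apply_of_uniform hVtindep hVtunif
      (fun p => addMulPerm (g p.1 p.2 * P') hQ')
  have hAV : ∀ a u, A ⁻¹' {a} ∩ U ⁻¹' {u} =
      (fun ω => (A ω, V ω)) ⁻¹' {(a, (addMulPerm (a * P) hQ).symm u)} := by
    intro a u
    ext ω
    simp only [hUpad, Set.mem_inter_iff, Set.mem_preimage, Set.mem_singleton_iff,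
      Prod.mk.injEq, Equiv.eq_symm_apply]
    exact and_congr_right fun h => by rw [h]
  have hjoint : ∀ s a, μ.real ((fun ω => (U ω, Ut ω)) ⁻¹' {s} ∩ A ⁻¹' {a}) =
      ((Fintype.card (Matrix (Fin m) (Fin T) F) : ℝ)⁻¹ *
        (Fintype.card (Matrix (Fin M) (Fin T) F) : ℝ)⁻¹) * μ.real (A ⁻¹' {a}) := by
    rintro ⟨u, w⟩ a
    have hset : (fun ω => (U ω, Ut ω)) ⁻¹' {(u, w)} ∩ A ⁻¹' {a} =
        (A ⁻¹' {a} ∩ U ⁻¹' {u}) ∩ Ut ⁻¹' {w} := by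
      ext ω
      simp only [Set.mem_inter_iff, Set.mem_preimage, Set.mem_singleton_iff, Prod.mk.injEq]
      tauto
    rw [hset, hAV, hUtAV, ← hAV, hUA]
    ring
  have hUUt : Measurable (fun ω => (U ω, Ut ω)) := by
    have hmap : Measurable fun q : (Matrix (Fin m) (Fin K) F × Matrix (Fin m) (Fin T) F) ×
        (Matrix (Fin M) (Fin K) F × Matrix (Fin M) (Fin T) F) =>
        (q.1.1 * P + q.1.2 * Q, q.2.1 * P' + q.2.2 * Q') := measurable_of_finite _
    simpa only [hU, hUt, Function.comp_def] using
      hmap.comp ((hA.prodMk hV).prodMk (hXt.prodMk hVt))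
  refine shMutualInfo_eq_zero_of_joint_eq_mul hUUt hA fun s a => ?_
  have hAsum : ∑ a, μ.real (A ⁻¹' {a}) = 1 := by
    simpa using sum_measureReal_inter_preimage_singleton (μ := μ) hA Set.univ
  rw [hjoint, ← sum_measureReal_inter_preimage_singleton hA (_ ⁻¹' {s})]
  simp only [hjoint, ← Finset.mul_sum, hAsum, mul_one]
end

section
/- Let β_1,...,β_{K+T} ∈ F be distinct, let α_1,...,α_T ∈ F be distinct, and assume α_j ≠ β_k for all j ∈ {1,...,T} and k ∈ {1,...,K+T}. Define the T×T matrix Q by Q_{i,j} = ∏_{k=1, k≠K+i}^{K+T} (α_j − β_k)/(β_{K+i} − β_k) for i, j ∈ {1,...,T}. Then Q is invertible (its determinant is nonzero)—each row and column of Q is a nonzero scalar multiple of the corresponding row/column of the Cauchy matrix with entries 1/(α_j − β_{K+i}). -/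
/-- the `T × T` matrix `Q` with entries
`Q_{i,j} = ∏_{k ≠ K+i} (α_j − β_k)/(β_{K+i} − β_k)` (a row/column rescaling of a
Cauchy matrix) is invertible, i.e. its determinant is nonzero. -/
theorem cauchy_like_matrix_invertible
    {F : Type*} [Field F] (K T : ℕ) (hK : 0 < K) (hT : 0 < T)
    (β : Fin (K + T) → F) (α : Fin T → F)
    (hβ : Function.Injective β) (hα : Function.Injective α)
    (hαβ : ∀ (j : Fin T) (k : Fin (K + T)), α j ≠ β k)
    (Q : Matrix (Fin T) (Fin T) F)
    (hQ : ∀ i j, Q i j = ∏ k ∈ Finset.univ.erase (Fin.natAdd K i),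
      (α j - β k) / (β (Fin.natAdd K i) - β k)) :
    IsUnit Q ∧ Q.det ≠ 0 := by
  have hdet : Q.det ≠ 0 := by
    intro h0
    obtain ⟨v, hv, hvQ⟩ := Matrix.exists_vecMul_eq_zero_iff.mpr h0
    -- The interpolant of `(0, v)` at the nodes `β` also vanishes at every `α j`.
    set r : Fin (K + T) → F := Fin.append 0 v
    set p := Lagrange.interpolate Finset.univ β r with hp
    have hnode (k) : p.eval (β k) = r k :=
      Lagrange.eval_interpolate_at_node r hβ.injOn (Finset.mem_univ k)
    have hpα (j : Fin T) : p.eval (α j) = 0 := by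
      have hj : ∑ i, v i * Q i j = 0 := congrFun hvQ j
      rw [← hj, hp, Lagrange.interpolate_apply, Polynomial.eval_finsetSum, Fin.sum_univ_add]
      simp [r, hQ, Lagrange.basis, Lagrange.basisDivisor, Polynomial.eval_prod,
        div_eq_inv_mul]
    have hdeg : p.degree < (Finset.univ : Finset (Fin K ⊕ Fin T)).card := by
      simpa [hp] using Lagrange.degree_interpolate_lt (s := Finset.univ) r hβ.injOn
    have hinj : Function.Injective (Sum.elim (fun k => β (Fin.castAdd T k)) α) :=
      (hβ.comp (Fin.castAdd_injective K T)).sumElim hα fun k j => (hαβ j _).symm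
    have hp0 : p = 0 := by
      refine Polynomial.eq_zero_of_degree_lt_of_eval_index_eq_zero _ hinj.injOn hdeg ?_
      rintro (k | j) -
      · simp [hnode, r]
      · exact hpα j
    refine hv (funext fun i => ?_)
    simpa [hp0, r] using (hnode (Fin.natAdd K i)).symm
  exact ⟨(Matrix.isUnit_iff_isUnit_det Q).mpr hdet.isUnit, hdet⟩
end
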